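/- Consider the convex quadratic program min_x ½xᵀQx + cᵀx subject to Ax = b and x ≥ 0, where Q is a real symmetric positive-semidefinite n×n matrix, c ∈ ℝⁿ, A a real m×n matrix, and b ∈ ℝᵐ. Let {1,…,n} = 𝒢 ∪ 𝒱 be a partition of the index set. Suppose x_𝒢 ∈ ℝ^{|𝒢|}, y* ∈ ℝᵐ, and z_𝒢 ∈ ℝ^{|𝒢|} satisfy the KKT conditions of the reduced problem min ½uᵀQ^{𝒢,𝒢}u + (c^𝒢)ᵀu subject to A^{·,𝒢}u = b, u ≥ 0: namely x_𝒢 ≥ 0, A^{·,𝒢}x_𝒢 = b, z_𝒢 = c^𝒢 + Q^{𝒢,𝒢}x_𝒢 − (A^{·,𝒢})ᵀy* ≥ 0, and x_𝒢ⁱ·z_𝒢ⁱ = 0 for all i ∈ 𝒢. Define z_𝒱 = c^𝒱 + Q^{𝒱,𝒢}x_𝒢 − (A^{·,𝒱})ᵀy*. If z_𝒱 ≥ 0, then the vector x̂ ∈ ℝⁿ defined by x̂^𝒢 = x_𝒢 and x̂^𝒱 = 0 is a global minimizer of the full quadratic program. -/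

import Mathlib

open Matrix

/-- Correctness of the variable-dropping heuristic.  If `(x_𝒢, y*, z_𝒢)`
satisfies the KKT conditions of the reduced quadratic program on the index set `𝒢`,
and the a-posteriori check `z_𝒱 ≥ 0` on the dropped indices `𝒱 = 𝒢ᶜ` passes, then the
vector `x̂` obtained by padding `x_𝒢` with zeros on `𝒱` is a global minimizer of the
full quadratic program `min ½xᵀQx + cᵀx  s.t.  Ax = b, x ≥ 0`. -/
theorem dropped_variables_padding_is_global_minimizer
    {n m : ℕ} (Q : Matrix (Fin n) (Fin n) ℝ) (hQ : Q.PosSemidef)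
    (c : Fin n → ℝ) (A : Matrix (Fin m) (Fin n) ℝ) (b : Fin m → ℝ)
    (G : Finset (Fin n))
    (xG : {i // i ∈ G} → ℝ) (ys : Fin m → ℝ) (zG : {i // i ∈ G} → ℝ)
    (hzG : zG = (fun i : {i // i ∈ G} => c i.1) +
        (Q.submatrix (Subtype.val : {i // i ∈ G} → Fin n)
          (Subtype.val : {i // i ∈ G} → Fin n)) *ᵥ xG -
        (A.submatrix id (Subtype.val : {i // i ∈ G} → Fin n))ᵀ *ᵥ ys)
    (hx0 : ∀ i, 0 ≤ xG i)
    (hfeas : (A.submatrix id (Subtype.val : {i // i ∈ G} → Fin n)) *ᵥ xG = b)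
    (hz0 : ∀ i, 0 ≤ zG i) (hcomp : ∀ i, xG i * zG i = 0)
    (zV : {i // i ∈ Gᶜ} → ℝ)
    (hzV : zV = (fun i : {i // i ∈ Gᶜ} => c i.1) +
        (Q.submatrix (Subtype.val : {i // i ∈ Gᶜ} → Fin n)
          (Subtype.val : {i // i ∈ G} → Fin n)) *ᵥ xG -
        (A.submatrix id (Subtype.val : {i // i ∈ Gᶜ} → Fin n))ᵀ *ᵥ ys)
    (hzV0 : ∀ i, 0 ≤ zV i)
    (xhat : Fin n → ℝ)
    (hxhat : xhat = fun i => if h : i ∈ G then xG ⟨i, h⟩ else 0) :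
    ∀ x : Fin n → ℝ, A *ᵥ x = b → (∀ i, 0 ≤ x i) →
      (1 / 2) * (xhat ⬝ᵥ (Q *ᵥ xhat)) + c ⬝ᵥ xhat ≤
        (1 / 2) * (x ⬝ᵥ (Q *ᵥ x)) + c ⬝ᵥ x := by
  intro x hAx hx
  have key : ∀ f : Fin n → ℝ, ∑ j, f j * xhat j = ∑ j : {i // i ∈ G}, f j.1 * xG j := by
    intro f
    have h1 : ∑ j, f j * xhat j = ∑ j ∈ G, f j * xhat j := by
      symm
      apply Finset.sum_subset (Finset.subset_univ G)
      intro j _ hj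
      simp [hxhat, hj]
    rw [h1, ← Finset.sum_coe_sort G]
    apply Finset.sum_congr rfl
    intro j _
    simp [hxhat]
  have hAh : A *ᵥ xhat = b := by
    rw [← hfeas]
    ext i
    simpa [mulVec, dotProduct] using key (A i)
  have hQh : ∀ i, (Q *ᵥ xhat) i = ∑ j : {i // i ∈ G}, Q i j.1 * xG j := by
    intro i
    simpa [mulVec, dotProduct] using key (Q i)
  obtain ⟨z, hz⟩ : ∃ z : Fin n → ℝ, z = c + Q *ᵥ xhat - Aᵀ *ᵥ ys := ⟨_, rfl⟩
  have hzg : ∀ i (h : i ∈ G), z i = zG ⟨i, h⟩ := by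
    intro i h
    rw [hz, hzG]
    simp only [Pi.add_apply, Pi.sub_apply, hQh]
    simp [mulVec, dotProduct]
  have hzv : ∀ i (h : i ∈ Gᶜ), z i = zV ⟨i, h⟩ := by
    intro i h
    rw [hz, hzV]
    simp only [Pi.add_apply, Pi.sub_apply, hQh]
    simp [mulVec, dotProduct]
  have hznn : ∀ i, 0 ≤ z i := by
    intro i
    by_cases h : i ∈ G
    · rw [hzg i h]; exact hz0 _
    · rw [hzv i (Finset.mem_compl.2 h)]; exact hzV0 _
  have hzx : z ⬝ᵥ xhat = 0 := by
    apply Finset.sum_eq_zero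
    intro i _
    by_cases h : i ∈ G
    · have := hcomp ⟨i, h⟩
      rw [hzg i h, hxhat]
      simp only [h, dite_true]
      linarith
    · simp [hxhat, h]
  have hzx' : 0 ≤ z ⬝ᵥ x := Finset.sum_nonneg fun i _ => mul_nonneg (hznn i) (hx i)
  have hexp : ∀ w, z ⬝ᵥ w = c ⬝ᵥ w + (Q *ᵥ xhat) ⬝ᵥ w - ys ⬝ᵥ (A *ᵥ w) := by
    intro w
    rw [hz, sub_dotProduct, add_dotProduct, mulVec_transpose, dotProduct_mulVec ys]
  have e1 := hexp x
  have e2 := hexp xhat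
  rw [hAx] at e1
  rw [hAh] at e2
  have hT : Qᵀ = Q := by simpa [IsHermitian, conjTranspose_eq_transpose_of_trivial] using hQ.1
  have hsymm : xhat ⬝ᵥ (Q *ᵥ x) = x ⬝ᵥ (Q *ᵥ xhat) := by
    rw [dotProduct_mulVec, ← mulVec_transpose, hT, dotProduct_comm]
  have hp : 0 ≤ (x - xhat) ⬝ᵥ (Q *ᵥ (x - xhat)) := by
    simpa using hQ.dotProduct_mulVec_nonneg (x - xhat)
  rw [mulVec_sub, sub_dotProduct, dotProduct_sub, dotProduct_sub] at hp
  rw [dotProduct_comm (Q *ᵥ xhat)] at e1 e2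
  linarith
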